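/- Let X ⊂ P^r be an integral non-degenerate projective variety over an algebraically closed field of characteristic zero. If every finite subset of X of cardinality at most t is linearly independent for t = r+1 (i.e., ρ'(X) = r+1, equivalently ρ'(X) > r), then X is a rational normal curve. -/

import Mathlib

open MvPolynomial

noncomputable section

namespace Dep

variable (K : Type) [Field K]

/-- `PS K n` is the projective space of lines in `K^n`, i.e. `ℙ^{n-1}`. -/
abbrev PS (n : ℕ) := Projectivization K (Fin n → K)

/-- The projective zero locus of a (homogeneous) polynomial. -/
def zeros {n : ℕ} (f : MvPolynomial (Fin n) K) : Set (PS K n) :=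
  {p | ∀ v : Fin n → K, ∀ hv : v ≠ 0, Projectivization.mk K v hv = p → eval v f = 0}

/-- Zariski-closed subsets of projective space: common zero loci of families of
homogeneous polynomials. -/
def IsZClosed {n : ℕ} (X : Set (PS K n)) : Prop :=
  ∃ F : Set (MvPolynomial (Fin n) K), (∀ f ∈ F, ∃ d, f.IsHomogeneous d) ∧
    X = ⋂ f ∈ F, zeros K f

/-- Irreducible closed subsets. -/
def IsIrredClosed {n : ℕ} (X : Set (PS K n)) : Prop :=
  X.Nonempty ∧ IsZClosed K X ∧
    ∀ C₁ C₂ : Set (PS K n), IsZClosed K C₁ → IsZClosed K C₂ → X ⊆ C₁ ∪ C₂ →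
      X ⊆ C₁ ∨ X ⊆ C₂

/-- Zariski closure. -/
def zclosure {n : ℕ} (S : Set (PS K n)) : Set (PS K n) :=
  ⋂₀ {C | IsZClosed K C ∧ S ⊆ C}

/-- Dimension of a subset of projective space: the supremum of lengths of strict chains
of irreducible closed subsets contained in it. -/
def zdim {n : ℕ} (X : Set (PS K n)) : ℕ :=
  sSup {m | ∃ C : Fin (m + 1) → Set (PS K n),
    (∀ i, IsIrredClosed K (C i) ∧ C i ⊆ X) ∧
    ∀ i j : Fin (m + 1), i < j → C i ⊂ C j}

/-- The linear subspace of `K^n` spanned by (representatives of) a set of projective points. -/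
def projSpan {n : ℕ} (S : Set (PS K n)) : Submodule K (Fin n → K) :=
  Submodule.span K (Projectivization.rep '' S)

/-- The projective linear span of a set of projective points, as a set of points. -/
def spanSet {n : ℕ} (S : Set (PS K n)) : Set (PS K n) :=
  {p | p.rep ∈ projSpan K S}

/-- Non-degenerate: not contained in any hyperplane, i.e. the points span everything. -/
def Nondeg {n : ℕ} (X : Set (PS K n)) : Prop := projSpan K X = ⊤

/-- An integral non-degenerate projective variety in `ℙ^{n-1}`. -/
def IsVariety {n : ℕ} (X : Set (PS K n)) : Prop :=
  IsIrredClosed K X ∧ Nondeg K X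

/-- A finite set of projective points is linearly independent if its span has dimension
(as a vector subspace) equal to its cardinality. -/
def LinIndepSet {n : ℕ} (S : Finset (PS K n)) : Prop :=
  Module.finrank K (projSpan K (S : Set (PS K n))) = S.card

/-- `ρ'(X)`: the maximal `t > 0` such that every subset of `X` with at most `t` points is
linearly independent. -/
def rho' {n : ℕ} (X : Set (PS K n)) : ℕ :=
  sSup {t | 0 < t ∧ ∀ S : Finset (PS K n), ↑S ⊆ X → S.card ≤ t → LinIndepSet K S}

/- ### Zero-dimensional subschemes, via homogeneous ideals -/

/-- A homogeneous ideal. -/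
def IsHomogIdeal {n : ℕ} (I : Ideal (MvPolynomial (Fin n) K)) : Prop :=
  ∀ f ∈ I, ∀ d : ℕ, homogeneousComponent d f ∈ I

/-- The homogeneous vanishing ideal of a set of projective points. -/
def hVanish {n : ℕ} (S : Set (PS K n)) : Ideal (MvPolynomial (Fin n) K) :=
  Ideal.span {f | (∃ d, f.IsHomogeneous d) ∧ S ⊆ zeros K f}

/-- The Hilbert function of (the subscheme defined by) a homogeneous ideal: the dimension of
the degree-`m` graded piece of the quotient ring. -/
def hilb {n : ℕ} (I : Ideal (MvPolynomial (Fin n) K)) (m : ℕ) : ℕ :=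
  Module.finrank K (Submodule.map (Ideal.Quotient.mkₐ K I).toLinearMap
    (homogeneousSubmodule (Fin n) K m))

/-- The subscheme defined by `I` is zero-dimensional of degree `d`: the Hilbert function is
eventually constant, equal to `d`. -/
def SchemeDeg {n : ℕ} (I : Ideal (MvPolynomial (Fin n) K)) (d : ℕ) : Prop :=
  ∃ N, ∀ m ≥ N, hilb K I m = d

/-- The subscheme defined by `I` lies in `X`. -/
def SubschemeOf {n : ℕ} (X : Set (PS K n)) (I : Ideal (MvPolynomial (Fin n) K)) : Prop :=
  hVanish K X ≤ I

/-- The degree-one part of a homogeneous ideal, i.e. the linear forms vanishing on the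
corresponding subscheme. -/
def degOnePart {n : ℕ} (I : Ideal (MvPolynomial (Fin n) K)) :
    Submodule K (MvPolynomial (Fin n) K) :=
  homogeneousSubmodule (Fin n) K 1 ⊓ I.restrictScalars K

/-- A zero-dimensional subscheme of degree `d` of `ℙ^{n-1}` is linearly independent iff its
projective span has dimension `d - 1`, i.e. exactly `n - d` independent linear forms vanish
on it. -/
def SchemeLinIndep {n : ℕ} (I : Ideal (MvPolynomial (Fin n) K)) (d : ℕ) : Prop :=
  Module.finrank K (degOnePart K I) = n - d

/-- The projective linear span of the subscheme defined by `I`: the common zero locus of the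
linear forms in `I`. -/
def schemeSpan {n : ℕ} (I : Ideal (MvPolynomial (Fin n) K)) : Set (PS K n) :=
  {p | ∀ f ∈ I, f.IsHomogeneous 1 → p ∈ zeros K f}

/-- The set-theoretic zero locus of an ideal. -/
def idealZeros {n : ℕ} (I : Ideal (MvPolynomial (Fin n) K)) : Set (PS K n) :=
  {p | ∀ f ∈ I, ∀ m : ℕ, p ∈ zeros K (homogeneousComponent m f)}

/-- The subscheme defined by `I` is reduced: `I` is the full vanishing ideal of its zero set. -/
def IsReducedScheme {n : ℕ} (I : Ideal (MvPolynomial (Fin n) K)) : Prop :=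
  I = hVanish K (idealZeros K I)

/- ### Smoothability: flat limits of reduced finite subsets -/

/-- Specialisation of a one-parameter family of ideals at `c : K`. -/
def fiberAt {n : ℕ} (J : Ideal (MvPolynomial (Fin n) (Polynomial K))) (c : K) :
    Ideal (MvPolynomial (Fin n) K) :=
  Ideal.map (MvPolynomial.map (Polynomial.evalRingHom c)) J

/-- `Z` (given by `I`, of degree `d`) is smoothable in `X`: either `Z` is already a reduced set
of `d` points of `X`, or `Z` is the flat limit at `0` of a one-parameter family whose general
member is a reduced set of `d` points of `X`.  Flatness over `K[t]` is encoded as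
torsion-freeness of the quotient. -/
def SmoothableIn {n : ℕ} (X : Set (PS K n)) (I : Ideal (MvPolynomial (Fin n) K)) (d : ℕ) :
    Prop :=
  (∃ S : Finset (PS K n), ↑S ⊆ X ∧ S.card = d ∧ I = hVanish K (S : Set (PS K n))) ∨
  ∃ J : Ideal (MvPolynomial (Fin n) (Polynomial K)),
    (∀ f ∈ J, ∀ m : ℕ, homogeneousComponent m f ∈ J) ∧
    (∀ p : Polynomial K, p ≠ 0 → ∀ f, MvPolynomial.C p * f ∈ J → f ∈ J) ∧
    fiberAt K J 0 = I ∧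
    ∃ E : Set K, E.Finite ∧ ∀ c : K, c ∉ E →
      ∃ S : Finset (PS K n), ↑S ⊆ X ∧ S.card = d ∧
        fiberAt K J c = hVanish K (S : Set (PS K n))

/-- `ρ''(X)`: the maximal `t > 0` such that every zero-dimensional subscheme of `X` of degree
at most `t` which is smoothable in `X` is linearly independent. -/
def rho'' {n : ℕ} (X : Set (PS K n)) : ℕ :=
  sSup {t | 0 < t ∧ ∀ (I : Ideal (MvPolynomial (Fin n) K)) (d : ℕ),
    IsHomogIdeal K I → SubschemeOf K X I → SchemeDeg K I d → SmoothableIn K X I d →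
    d ≤ t → SchemeLinIndep K I d}

/-- `ρ(X)`: the maximal `t > 0` such that every zero-dimensional subscheme of `X` of degree
at most `t` is linearly independent. -/
def rho {n : ℕ} (X : Set (PS K n)) : ℕ :=
  sSup {t | 0 < t ∧ ∀ (I : Ideal (MvPolynomial (Fin n) K)) (d : ℕ),
    IsHomogIdeal K I → SubschemeOf K X I → SchemeDeg K I d →
    d ≤ t → SchemeLinIndep K I d}

/- ### Ranks and secant varieties -/

/-- The `X`-rank of a point `q`. -/
def Xrank {n : ℕ} (X : Set (PS K n)) (q : PS K n) : ℕ :=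
  sInf {t | 0 < t ∧ ∃ S : Finset (PS K n), ↑S ⊆ X ∧ S.card = t ∧ q ∈ spanSet K ↑S}

/-- `𝒮(X,q)`: the set of finite subsets of `X` of minimal cardinality whose span contains `q`. -/
def Sq {n : ℕ} (X : Set (PS K n)) (q : PS K n) : Set (Finset (PS K n)) :=
  {S | ↑S ⊆ X ∧ S.card = Xrank K X q ∧ q ∈ spanSet K ↑S}

/-- The `k`-th secant variety of `X`. -/
def secant {n : ℕ} (X : Set (PS K n)) (k : ℕ) : Set (PS K n) :=
  zclosure K (⋃ S ∈ {S : Finset (PS K n) | ↑S ⊆ X ∧ S.card = k}, spanSet K (S : Set (PS K n)))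

/-- The generic `X`-rank: the least `k` with `σ_k(X) = ℙ^{n-1}`. -/
def genRank {n : ℕ} (X : Set (PS K n)) : ℕ :=
  sInf {k | 0 < k ∧ secant K X k = Set.univ}

/-- The border `X`-rank of a point. -/
def borderRank {n : ℕ} (X : Set (PS K n)) (q : PS K n) : ℕ :=
  sInf {k | 0 < k ∧ q ∈ secant K X k}

/-- `X ⊆ ℙ^{m-1}` of dimension `dX` is not defective: every secant variety has the expected
dimension. -/
def NotDefective {m : ℕ} (X : Set (PS K m)) (dX : ℕ) : Prop :=
  ∀ k : ℕ, 0 < k → zdim K (secant K X k) = min (m - 1) (k * (dX + 1) - 1)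

/- ### Rational normal curves -/

/-- `X ⊆ ℙ^{n-1}` is a rational normal curve: up to a linear change of coordinates it is the
image of `ℙ^1` under the degree-`(n-1)` Veronese map. -/
def IsRNC {n : ℕ} (X : Set (PS K n)) : Prop :=
  ∃ g : (Fin n → K) ≃ₗ[K] (Fin n → K),
    X = {p | ∃ v : Fin 2 → K,
      ∃ hv : g (fun i => v 0 ^ (i : ℕ) * v 1 ^ (n - 1 - (i : ℕ))) ≠ 0,
      p = Projectivization.mk K (g (fun i => v 0 ^ (i : ℕ) * v 1 ^ (n - 1 - (i : ℕ)))) hv}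

/- ### Linear projections and linear normality -/

/-- The pull-back map on polynomials induced by a linear map `π : K^{n+1} → K^n`. -/
def pullback {n m : ℕ} (π : (Fin m → K) →ₗ[K] (Fin n → K)) :
    MvPolynomial (Fin n) K →ₐ[K] MvPolynomial (Fin m) K :=
  aeval (fun i => ∑ j : Fin m, MvPolynomial.C (π (Pi.single j 1) i) * MvPolynomial.X j)

/-- The image of a set of points under the projection induced by `π`. -/
def projImage {n m : ℕ} (π : (Fin m → K) →ₗ[K] (Fin n → K)) (Y : Set (PS K m)) :
    Set (PS K n) :=
  {q | ∃ p ∈ Y, ∃ h : π p.rep ≠ 0, q = Projectivization.mk K (π p.rep) h}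

/-- The linear projection from the point `o` (encoded by the linear map `π` with kernel the
line of `o`) restricts to an embedding of `Y`: `o ∉ Y` and `o` lies on no secant or tangent
line of `Y`, i.e. on the span of no degree-2 subscheme of `Y`. -/
def EmbedsFrom {n : ℕ} (π : (Fin (n + 1) → K) →ₗ[K] (Fin n → K)) (o : PS K (n + 1))
    (Y : Set (PS K (n + 1))) : Prop :=
  Function.Surjective π ∧
  LinearMap.ker π = Submodule.span K {o.rep} ∧ o ∉ Y ∧
  ∀ I : Ideal (MvPolynomial (Fin (n + 1)) K),
    IsHomogIdeal K I → SubschemeOf K Y I → SchemeDeg K I 2 → o ∉ schemeSpan K I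

/-- `X ⊆ ℙ^{n-1}` is linearly normal: it is not an isomorphic linear projection of a
non-degenerate variety in `ℙ^n`. -/
def LinearlyNormal {n : ℕ} (X : Set (PS K n)) : Prop :=
  ¬ ∃ (Y : Set (PS K (n + 1))) (o : PS K (n + 1))
      (π : (Fin (n + 1) → K) →ₗ[K] (Fin n → K)),
      IsVariety K Y ∧ EmbedsFrom K π o Y ∧ projImage K π Y = X

/- ### Tangent spaces and smooth points -/

/-- The (affine cone over the) embedded tangent space of `X` at `p`: the common kernel of the
differentials at `p` of all elements of the vanishing ideal of `X`. -/
def tangentSub {n : ℕ} (X : Set (PS K n)) (p : PS K n) : Submodule K (Fin n → K) :=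
  ⨅ f ∈ hVanish K X, LinearMap.ker
    (∑ j : Fin n, eval p.rep (pderiv j f) • (LinearMap.proj j : (Fin n → K) →ₗ[K] K))

/-- `p` is a smooth point of `X`. -/
def SmoothAt {n : ℕ} (X : Set (PS K n)) (p : PS K n) : Prop :=
  p ∈ X ∧ Module.finrank K (tangentSub K X p) = zdim K X + 1

/-- A smooth integral non-degenerate projective variety. -/
def SmoothVariety {n : ℕ} (X : Set (PS K n)) : Prop :=
  IsVariety K X ∧ ∀ p ∈ X, SmoothAt K X p

/-!
Choose `r + 1` points of `X` as the coordinate points. Two points of `X` with the same ratio of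
coordinates `o` and `i` span, together with the remaining `r - 1` coordinate points, at most a
projective `(r - 1)`-space, so by independence they coincide: the projection of `X` to the
`(o, i)`-line is injective. In characteristic zero an injective projection is birational onto its
image. Indeed, let `ξ` be the generic point of `X`, with coordinates in a field `L`, and let `F ⊆ L`
be generated by `ξ i / ξ o`. Injectivity makes the two images of `ξ j / ξ o` in `L ⊗[F] L` agree up
to a nilpotent, which by separability forces `ξ j / ξ o ∈ F`. Exchanging `i` and `j`, each of the
two ratios generates the other, so they are related by a Möbius transformation. As `X` passes
through the coordinate points, that relation is linear in the reciprocals of the coordinates: the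
standard Cremona transformation straightens `X` into a line, and the Cremona image of such a line is
a rational normal curve.
-/

section FieldTheory

open scoped TensorProduct IntermediateField

theorem isAlgebraic_of_isNilpotent_tmul_sub {F L : Type*} [Field F] [Field L] [Algebra F L] {y : L}
    (hy : IsNilpotent (y ⊗ₜ[F] (1 : L) - (1 : L) ⊗ₜ[F] y)) : IsAlgebraic F y := by
  by_contra htr
  obtain ⟨N, hN⟩ := hy
  have hpow : LinearIndependent F fun n : ℕ ↦ y ^ n := by
    simpa [Function.comp_def] using (Polynomial.basisMonomials F).linearIndependent.map_injOn
      (Polynomial.aeval y).toLinearMap (transcendental_iff_injective.mp htr).injOn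
  have hmon : LinearIndependent F fun m : ℕ ↦ (y ^ m) ⊗ₜ[F] (y ^ (N - m)) :=
    (hpow.tmul_of_flat_left hpow).comp (fun m ↦ (m, N - m)) fun _ _ h ↦ (Prod.ext_iff.mp h).1
  have hsum : ∑ m ∈ Finset.range (N + 1),
      ((-1) ^ (N - m) * (N.choose m : F)) • ((y ^ m) ⊗ₜ[F] (y ^ (N - m))) = 0 := by
    rw [← hN, sub_eq_add_neg, add_pow]
    refine Finset.sum_congr rfl fun m _ ↦ ?_
    have hsplit : (y ^ m) ⊗ₜ[F] (y ^ (N - m)) = (y ⊗ₜ[F] (1 : L)) ^ m * (1 ⊗ₜ[F] y) ^ (N - m) := by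
      simp [Algebra.TensorProduct.tmul_pow]
    rw [hsplit, neg_pow (1 ⊗ₜ[F] y : L ⊗[F] L), Algebra.smul_def, map_mul, map_pow, map_neg,
      map_one, map_natCast]
    ring
  simpa using linearIndependent_iff'.mp hmon _ _ hsum N (Finset.self_mem_range_succ N)

theorem eq_of_isNilpotent_sub_of_separable {R S : Type*} [CommRing R] [CommRing S] [Algebra R S]
    {p : Polynomial R} (hp : p.Separable) {x y : S} (hx : Polynomial.aeval x p = 0)
    (hy : Polynomial.aeval y p = 0) (hxy : IsNilpotent (x - y)) : x = y := by
  obtain ⟨a, b, hab⟩ := Polynomial.separable_def' p |>.mp hp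
  have hunit : IsUnit (Polynomial.aeval x p.derivative) :=
    IsUnit.of_mul_eq_one_right (Polynomial.aeval x b)
      (by simpa [hx] using congrArg (Polynomial.aeval x) hab)
  exact (Polynomial.existsUnique_nilpotent_sub_and_aeval_eq_zero (hx ▸ IsNilpotent.zero)
    hunit).unique ⟨by simp, hx⟩ ⟨hxy, hy⟩

theorem mem_range_algebraMap_of_isNilpotent_tmul_sub {F L : Type*} [Field F] [CharZero F] [Field L]
    [Algebra F L] {y : L} (hy : IsNilpotent (y ⊗ₜ[F] (1 : L) - (1 : L) ⊗ₜ[F] y)) :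
    y ∈ Set.range (algebraMap F L) := by
  have hsep : (minpoly F y).Separable :=
    (minpoly.irreducible (isAlgebraic_of_isNilpotent_tmul_sub hy).isIntegral).separable
  have hleft : Polynomial.aeval (y ⊗ₜ[F] (1 : L)) (minpoly F y) = 0 :=
    (Polynomial.aeval_algHom_apply Algebra.TensorProduct.includeLeft y _).trans (by simp)
  have hright : Polynomial.aeval ((1 : L) ⊗ₜ[F] y) (minpoly F y) = 0 :=
    (Polynomial.aeval_algHom_apply Algebra.TensorProduct.includeRight y _).trans (by simp)
  have heq := eq_of_isNilpotent_sub_of_separable hsep hleft hright hy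
  exact (Algebra.IsEffective.of_faithfullyFlat F L y).mp (sub_eq_zero.mpr heq)

theorem natDegree_le_one_of_adjoin_eq_top {K : Type*} [Field K] {f : RatFunc K} (hf : K⟮f⟯ = ⊤) :
    f.num.natDegree ≤ 1 ∧ f.denom.natDegree ≤ 1 := by
  have hdeg := RatFunc.finrank_eq_max_natDegree f
  rw [hf, IntermediateField.finrank_top] at hdeg
  omega

theorem exists_mobius_of_mem_adjoin {K L : Type*} [Field K] [Field L] [Algebra K L] {x y : L}
    (hx : Transcendental K x) (hyx : y ∈ K⟮x⟯) (hxy : x ∈ K⟮y⟯) :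
    ∃ a b c d : K, (c ≠ 0 ∨ d ≠ 0) ∧
      y * (algebraMap K L c * x + algebraMap K L d) = algebraMap K L a * x + algebraMap K L b := by
  let e : RatFunc K →ₐ[K] L :=
    K⟮x⟯.val.comp (RatFunc.algEquivOfTranscendental x hx).toAlgHom
  have heX : e RatFunc.X = x := by
    simp [e]
  obtain ⟨f, rfl⟩ : ∃ f, e f = y := by
    exact ⟨(RatFunc.algEquivOfTranscendental x hx).symm ⟨y, hyx⟩, by simp [e]⟩
  have htop : K⟮f⟯ = ⊤ := by
    obtain ⟨g, hg, hgx⟩ : x ∈ (K⟮f⟯).map e := by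
      simpa [IntermediateField.adjoin_map] using hxy
    rw [eq_top_iff, ← RatFunc.adjoin_X, IntermediateField.adjoin_simple_le_iff]
    exact e.injective (hgx.trans heX.symm) ▸ hg
  have hef : e f * Polynomial.aeval x f.denom = Polynomial.aeval x f.num := by
    have h0 : Polynomial.aeval x f.denom ≠ 0 := fun h ↦
      RatFunc.denom_ne_zero f (transcendental_iff.mp hx _ h)
    rw [show e f = _ from RatFunc.algEquivOfTranscendental_apply x hx f, div_mul_cancel₀ _ h0]
  obtain ⟨hnum, hden⟩ := natDegree_le_one_of_adjoin_eq_top htop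
  obtain ⟨a, b, hab⟩ := Polynomial.exists_eq_X_add_C_of_natDegree_le_one hnum
  obtain ⟨c, d, hcd⟩ := Polynomial.exists_eq_X_add_C_of_natDegree_le_one hden
  refine ⟨a, b, c, d, ?_, by simpa [hab, hcd] using hef⟩
  by_contra! h
  exact RatFunc.denom_ne_zero f (by simp [hcd, h])

end FieldTheory
section GenericPoint

open scoped TensorProduct IntermediateField

variable {K σ : Type*} [Field K]

theorem isNilpotent_aeval_sub_aeval [IsAlgClosed K] [Finite σ] {T : Type*} [CommRing T]
    [Algebra K T] {I : Ideal (MvPolynomial σ K)} {p q : MvPolynomial σ K}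
    (hpq : ∀ᵉ (w ∈ zeroLocus K I) (z ∈ zeroLocus K I), eval w p = eval z p → eval w q = eval z q)
    {x y : σ → T} (hx : ∀ f ∈ I, aeval x f = 0) (hy : ∀ f ∈ I, aeval y f = 0)
    (hxy : aeval x p = aeval y p) : IsNilpotent (aeval x q - aeval y q) := by
  let ev : MvPolynomial (σ ⊕ σ) K →ₐ[K] T := aeval (Sum.elim x y)
  have hevl (f : MvPolynomial σ K) : ev (rename Sum.inl f) = aeval x f := by
    simp [ev, aeval_rename]
  have hevr (f : MvPolynomial σ K) : ev (rename Sum.inr f) = aeval y f := by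
    simp [ev, aeval_rename]
  have hrad : rename Sum.inl q - rename Sum.inr q ∈ (RingHom.ker ev).radical := by
    rw [← vanishingIdeal_zeroLocus_eq_radical (K := K), mem_vanishingIdeal_iff]
    intro z hz
    have hl : z ∘ Sum.inl ∈ zeroLocus K I := fun f hf ↦ by
      simpa [aeval_rename] using hz (rename Sum.inl f) ((hevl f).trans (hx f hf))
    have hr : z ∘ Sum.inr ∈ zeroLocus K I := fun f hf ↦ by
      simpa [aeval_rename] using hz (rename Sum.inr f) ((hevr f).trans (hy f hf))
    have hp : eval (z ∘ Sum.inl) p = eval (z ∘ Sum.inr) p := by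
      have hz' := hz (rename Sum.inl p - rename Sum.inr p)
        (by rw [RingHom.mem_ker, map_sub, hevl, hevr, hxy, sub_self])
      rwa [map_sub, aeval_rename, aeval_rename, sub_eq_zero] at hz'
    rw [map_sub, aeval_rename, aeval_rename, sub_eq_zero]
    exact hpq _ hl _ hr hp
  obtain ⟨N, hN⟩ := hrad
  exact ⟨N, by simpa [hevl, hevr] using hN⟩

theorem aeval_mem_adjoin_aeval [IsAlgClosed K] [CharZero K] [Finite σ] {L : Type*} [Field L]
    [Algebra K L] {I : Ideal (MvPolynomial σ K)} {p q : MvPolynomial σ K}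
    (hpq : ∀ᵉ (w ∈ zeroLocus K I) (z ∈ zeroLocus K I), eval w p = eval z p → eval w q = eval z q)
    {ξ : σ → L} (hξ : ξ ∈ zeroLocus L I) : aeval ξ q ∈ K⟮aeval ξ p⟯ := by
  -- Base change to `L ⊗[F] L` yields two conjugates of `ξ` on which `p` takes the same value.
  let F := K⟮aeval ξ p⟯
  let inl : L →ₐ[K] L ⊗[F] L :=
    (Algebra.TensorProduct.includeLeft : L →ₐ[F] L ⊗[F] L).restrictScalars K
  let inr : L →ₐ[K] L ⊗[F] L :=
    (Algebra.TensorProduct.includeRight : L →ₐ[F] L ⊗[F] L).restrictScalars K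
  have hmap (φ : L →ₐ[K] L ⊗[F] L) (f : MvPolynomial σ K) :
      aeval (φ ∘ ξ) f = φ (aeval ξ f) := by
    rw [Function.comp_def, ← comp_aeval_apply]
  have hp : inl (aeval ξ p) = inr (aeval ξ p) :=
    Algebra.TensorProduct.tmul_one_eq_one_tmul
      (⟨aeval ξ p, IntermediateField.mem_adjoin_simple_self K _⟩ : F)
  have hnil := isNilpotent_aeval_sub_aeval hpq (x := inl ∘ ξ) (y := inr ∘ ξ)
    (fun f hf ↦ by rw [hmap, hξ f hf, map_zero]) (fun f hf ↦ by rw [hmap, hξ f hf, map_zero])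
    (by rw [hmap, hmap, hp])
  rw [hmap, hmap] at hnil
  obtain ⟨z, hz⟩ := mem_range_algebraMap_of_isNilpotent_tmul_sub (F := F) hnil
  exact hz ▸ z.2

theorem exists_aeval_eq_zero_iff_mem (P : Ideal (MvPolynomial σ K)) [P.IsPrime] :
    ∃ ξ : σ → P.ResidueField, ∀ f, aeval ξ f = 0 ↔ f ∈ P := by
  refine ⟨algebraMap (MvPolynomial σ K) P.ResidueField ∘ X, fun f ↦ ?_⟩
  rw [aeval_algebraMap_apply, aeval_X_left_apply, Ideal.algebraMap_residueField_eq_zero]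

theorem transcendental_aeval_of_forall_sub_C_notMem [IsAlgClosed K] {L : Type*} [Field L]
    [Algebra K L] {I : Ideal (MvPolynomial σ K)} {ξ : σ → L} (hξ : ∀ f, aeval ξ f = 0 → f ∈ I)
    {p : MvPolynomial σ K} (hp : ∀ c, p - C c ∉ I) : Transcendental K (aeval ξ p) := by
  intro halg
  obtain ⟨c, hc⟩ := minpoly.mem_range_of_degree_eq_one K _
    (IsAlgClosed.degree_eq_one_of_irreducible K (minpoly.irreducible halg.isIntegral))
  exact hp c (hξ _ (by simp [← hc]))

end GenericPoint

section Homogeneous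

variable {R σ : Type*} [CommSemiring R]

theorem eval_smul_of_isHomogeneous {f : MvPolynomial σ R} {d : ℕ} (hf : f.IsHomogeneous d)
    (c : R) (v : σ → R) : eval (c • v) f = c ^ d * eval v f := by
  rw [eval_eq, eval_eq, Finset.mul_sum]
  refine Finset.sum_congr rfl fun m hm ↦ ?_
  have hdeg : ∑ i ∈ m.support, m i = d := by
    simpa [Finsupp.weight_apply, Finsupp.sum] using hf (mem_support_iff.mp hm)
  simp only [Pi.smul_apply, smul_eq_mul, mul_pow, Finset.prod_mul_distrib,
    Finset.prod_pow_eq_pow_sum, hdeg]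
  ring

theorem exists_isHomogeneous_eval_eq (f : MvPolynomial σ R) (o : σ) :
    ∃ (d : ℕ) (F : MvPolynomial σ R), F.IsHomogeneous d ∧
      ∀ y : σ → R, y o = 1 → eval y F = eval y f := by
  refine ⟨f.totalDegree, ∑ i ∈ Finset.range (f.totalDegree + 1),
    X o ^ (f.totalDegree - i) * homogeneousComponent i f,
    IsHomogeneous.sum _ _ _ fun i hi ↦ ?_, fun y hy ↦ ?_⟩
  · simpa [Nat.sub_add_cancel (Finset.mem_range_succ_iff.mp hi)] using
      (isHomogeneous_X_pow (R := R) o (f.totalDegree - i)).mul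
        (homogeneousComponent_isHomogeneous i f)
  · conv_rhs => rw [← sum_homogeneousComponent f]
    simp [map_sum, hy]

theorem exists_isHomogeneous_eval_eq_eval_apply {τ : Type*} [Finite τ]
    (e : (τ → R) →ₗ[R] (σ → R)) {f : MvPolynomial σ R} {d : ℕ} (hf : f.IsHomogeneous d) :
    ∃ g : MvPolynomial τ R, g.IsHomogeneous d ∧ ∀ v, eval v g = eval (e v) f := by
  classical
  cases nonempty_fintype τ
  let A := LinearMap.toMatrix' e
  refine ⟨aeval A.toMvPolynomial f, ?_, fun v ↦ ?_⟩
  · simpa using hf.aeval _ A.toMvPolynomial_isHomogeneous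
  · rw [← coe_aeval_eq_eval, RingHom.coe_coe, comp_aeval_apply, ← coe_aeval_eq_eval,
      RingHom.coe_coe]
    congr 2
    funext i
    rw [aeval_eq_eval, Matrix.toMvPolynomial_eval_eq_apply, LinearMap.toMatrix'_mulVec]

end Homogeneous

/-- The affine cone, without its vertex, over an irreducible Zariski-closed subset of projective
space, described through the homogeneous polynomials vanishing on it. The empty set is allowed. -/
structure IsIrredClosedCone {K σ : Type*} [Field K] (Y : Set (σ → K)) : Prop where
  ne_zero : ∀ y ∈ Y, y ≠ 0
  smul_mem : ∀ {t : K} {y : σ → K}, t ≠ 0 → y ∈ Y → t • y ∈ Y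
  prime : ∀ {f g : MvPolynomial σ K} {d e : ℕ}, f.IsHomogeneous d → g.IsHomogeneous e →
    (∀ y ∈ Y, eval y (f * g) = 0) → (∀ y ∈ Y, eval y f = 0) ∨ (∀ y ∈ Y, eval y g = 0)
  closed : ∀ y ≠ 0, (∀ (f : MvPolynomial σ K) (d : ℕ), f.IsHomogeneous d →
    (∀ z ∈ Y, eval z f = 0) → eval y f = 0) → y ∈ Y

/-- The points of a cone in the affine chart where the homogeneous coordinate `o` equals `1`. -/
def chart {K σ : Type*} [Field K] (Y : Set (σ → K)) (o : σ) : Set (σ → K) :=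
  {y ∈ Y | y o = 1}

namespace IsIrredClosedCone

variable {K σ : Type*} [Field K] {Y : Set (σ → K)} {o : σ}

theorem inv_smul_mem_chart (hY : IsIrredClosedCone Y) {y : σ → K} (hy : y ∈ Y) (hyo : y o ≠ 0) :
    (y o)⁻¹ • y ∈ chart Y o :=
  ⟨hY.smul_mem (inv_ne_zero hyo) hy, by simp [hyo]⟩

theorem eval_eq_zero_of_chart (hY : IsIrredClosedCone Y) (ho : (chart Y o).Nonempty)
    {f : MvPolynomial σ K} {d : ℕ} (hf : f.IsHomogeneous d)
    (hfo : ∀ y ∈ chart Y o, eval y f = 0) : ∀ y ∈ Y, eval y f = 0 := by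
  have hmul : ∀ y ∈ Y, eval y (f * X o) = 0 := by
    intro y hy
    rcases eq_or_ne (y o) 0 with hyo | hyo
    · simp [hyo]
    · have h := hfo _ (hY.inv_smul_mem_chart hy hyo)
      rw [eval_smul_of_isHomogeneous hf] at h
      simp [(mul_eq_zero.mp h).resolve_left (pow_ne_zero _ (inv_ne_zero hyo))]
  refine (hY.prime hf (isHomogeneous_X K o) hmul).resolve_right fun h ↦ ?_
  obtain ⟨y, hy, hyo⟩ := ho
  simpa [hyo] using h y hy

theorem isPrime_vanishingIdeal_chart (hY : IsIrredClosedCone Y) (ho : (chart Y o).Nonempty) :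
    (vanishingIdeal K (chart Y o)).IsPrime := by
  refine ⟨?_, fun {f g} hfg ↦ ?_⟩
  · obtain ⟨y, hy⟩ := ho
    refine (Ideal.ne_top_iff_one _).mpr fun h ↦ ?_
    simpa using h y hy
  · obtain ⟨d, F, hF, hFf⟩ := exists_isHomogeneous_eval_eq f o
    obtain ⟨e, G, hG, hGg⟩ := exists_isHomogeneous_eval_eq g o
    have hFG := hY.eval_eq_zero_of_chart ho (hF.mul hG) fun y hy ↦ by
      rw [map_mul, hFf y hy.2, hGg y hy.2, ← map_mul]
      exact hfg y hy
    refine (hY.prime hF hG hFG).imp (fun h y hy ↦ ?_) (fun h y hy ↦ ?_)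
    · exact (hFf y hy.2).symm.trans (h y hy.1)
    · exact (hGg y hy.2).symm.trans (h y hy.1)

theorem zeroLocus_vanishingIdeal_chart (hY : IsIrredClosedCone Y) :
    zeroLocus K (vanishingIdeal K (chart Y o)) = chart Y o := by
  refine subset_antisymm (fun w hw ↦ ?_) (zeroLocus_vanishingIdeal_le _)
  have hwo : w o = 1 := by
    have h := hw (X o - 1) fun y hy ↦ by simp [hy.2]
    rwa [map_sub, aeval_X, map_one, sub_eq_zero] at h
  refine ⟨hY.closed w ?_ fun f d _ hfY ↦ hw f fun y hy ↦ hfY y hy.1, hwo⟩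
  rintro rfl
  simp at hwo

theorem preimage {τ : Type*} [Finite σ] [Finite τ] (hY : IsIrredClosedCone Y)
    (e : (τ → K) ≃ₗ[K] (σ → K)) : IsIrredClosedCone (e ⁻¹' Y) where
  ne_zero y hy := by
    rintro rfl
    exact hY.ne_zero _ hy (map_zero e)
  smul_mem ht hy := by
    rw [Set.mem_preimage, map_smul]
    exact hY.smul_mem ht hy
  prime hf hg hfg := by
    obtain ⟨f', hf', hff'⟩ := exists_isHomogeneous_eval_eq_eval_apply e.symm.toLinearMap hf
    obtain ⟨g', hg', hgg'⟩ := exists_isHomogeneous_eval_eq_eval_apply e.symm.toLinearMap hg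
    refine (hY.prime hf' hg' fun y hy ↦ ?_).imp (fun h y hy ↦ ?_) fun h y hy ↦ ?_
    · rw [map_mul, hff', hgg', ← map_mul]
      exact hfg _ (by simpa using hy)
    · simpa [hff'] using h _ hy
    · simpa [hgg'] using h _ hy
  closed y hy h := by
    refine hY.closed _ (e.map_ne_zero_iff.mpr hy) fun f d hf hfY ↦ ?_
    obtain ⟨g, hg, hgf⟩ := exists_isHomogeneous_eval_eq_eval_apply e.toLinearMap hf
    have hgy := h g d hg fun z hz ↦ (hgf z).trans (hfY _ hz)
    exact (hgf y).symm.trans hgy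

end IsIrredClosedCone

section Cremona

variable {σ : Type*} [Fintype σ] [DecidableEq σ]

/-- The standard Cremona transformation in homogeneous coordinates: up to the common factor
`∏ k, y k` it inverts every coordinate. -/
def cremona {R : Type*} [CommMonoid R] (y : σ → R) : σ → R :=
  fun j ↦ ∏ k ∈ Finset.univ.erase j, y k

theorem cremona_smul {R : Type*} [CommMonoid R] (t : R) (y : σ → R) :
    cremona (t • y) = t ^ (Fintype.card σ - 1) • cremona y := by
  funext j
  simp [cremona, Finset.prod_mul_distrib, Finset.card_erase_of_mem]

theorem map_cremona {R S F : Type*} [CommMonoid R] [CommMonoid S] [FunLike F R S]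
    [MonoidHomClass F R S] (φ : F) (y : σ → R) (j : σ) :
    φ (cremona y j) = cremona (fun k ↦ φ (y k)) j :=
  map_prod φ y _

variable {K : Type*} [Field K] {y l : σ → K} {j : σ}

theorem cremona_apply_ne_zero (hy : ∀ k ≠ j, y k ≠ 0) : cremona y j ≠ 0 :=
  Finset.prod_ne_zero_iff.mpr fun k hk ↦ hy k (Finset.ne_of_mem_erase hk)

theorem cremona_eq_smul_single (hj : y j = 0) : cremona y = cremona y j • Pi.single j 1 := by
  funext k
  rcases eq_or_ne k j with rfl | hkj
  · simp
  · simpa [hkj, cremona] using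
      Finset.prod_eq_zero (Finset.mem_erase.mpr ⟨hkj.symm, Finset.mem_univ j⟩) hj

theorem exists_eq_smul_cremona_of_mul_eq {s : K} (hs : s ≠ 0) (h : ∀ j, y j * l j = s) :
    ∃ t : K, t ≠ 0 ∧ y = t • cremona l := by
  have hl : ∏ k, l k ≠ 0 :=
    Finset.prod_ne_zero_iff.mpr fun k _ ↦ right_ne_zero_of_mul (h k ▸ hs)
  refine ⟨s / ∏ k, l k, div_ne_zero hs hl, funext fun j ↦ ?_⟩
  rw [Pi.smul_apply, smul_eq_mul, div_mul_eq_mul_div, eq_div_iff hl,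
    ← Finset.mul_prod_erase _ _ (Finset.mem_univ j), ← h j, mul_assoc]
  rfl

theorem exists_cremona_line_eq_smul_single {c d : σ → K}
    (h : Pairwise fun k l ↦ c k * d l ≠ c l * d k) (j : σ) :
    ∃ t : K, t ≠ 0 ∧ cremona (-d j • c + c j • d) = t • Pi.single j 1 := by
  refine ⟨_, cremona_apply_ne_zero fun k hkj hk ↦ h hkj ?_,
    cremona_eq_smul_single (by simp [mul_comm])⟩
  simp only [Pi.add_apply, Pi.smul_apply, smul_eq_mul] at hk
  linear_combination -hk

end Cremona

section Veronese

variable {R : Type*} [CommSemiring R]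

/-- The Veronese map `ℙ¹ → ℙⁿ` in homogeneous coordinates. -/
def veronese (n : ℕ) (v : Fin 2 → R) : Fin (n + 1) → R :=
  fun i ↦ v 0 ^ (i : ℕ) * v 1 ^ (n - i)

theorem exists_linearMap_veronese_eq_eval {ι : Type*} {n : ℕ} (F : ι → MvPolynomial (Fin 2) R)
    (hF : ∀ j, (F j).IsHomogeneous n) :
    ∃ M : (Fin (n + 1) → R) →ₗ[R] (ι → R), ∀ v, M (veronese n v) = fun j ↦ eval v (F j) := by
  refine ⟨LinearMap.pi fun j ↦
    ∑ m ∈ (F j).support, coeff m (F j) • LinearMap.proj (Fin.ofNat (n + 1) (m 0)), fun v ↦ ?_⟩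
  funext j
  simp only [LinearMap.pi_apply, LinearMap.sum_apply, LinearMap.smul_apply, LinearMap.proj_apply,
    smul_eq_mul, eval_eq']
  refine Finset.sum_congr rfl fun m hm ↦ ?_
  have hdeg : m 0 + m 1 = n := by
    simpa [Finsupp.weight_apply, Finsupp.sum_fintype] using hF j (mem_support_iff.mp hm)
  have hmod : m 0 % (n + 1) = m 0 := Nat.mod_eq_of_lt (by omega)
  have hsub : n - m 0 = m 1 := by omega
  simp [veronese, hmod, hsub]

theorem exists_linearEquiv_veronese_eq_cremona {K : Type*} [Field K] {n : ℕ}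
    {c d : Fin (n + 1) → K} (h : Pairwise fun k l ↦ c k * d l ≠ c l * d k) :
    ∃ M : (Fin (n + 1) → K) ≃ₗ[K] (Fin (n + 1) → K),
      ∀ v, M (veronese n v) = cremona (v 1 • c + v 0 • d) := by
  let line (k : Fin (n + 1)) : MvPolynomial (Fin 2) K := C (c k) * X 1 + C (d k) * X 0
  have hline (k : Fin (n + 1)) : (line k).IsHomogeneous 1 :=
    (isHomogeneous_C_mul_X _ _).add (isHomogeneous_C_mul_X _ _)
  have hhom (j : Fin (n + 1)) : (cremona line j).IsHomogeneous n := by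
    simpa [cremona, Finset.card_erase_of_mem] using
      IsHomogeneous.prod (Finset.univ.erase j) line _ fun k _ ↦ hline k
  obtain ⟨M, hM⟩ := exists_linearMap_veronese_eq_eval (cremona line) hhom
  have hMv (v : Fin 2 → K) : M (veronese n v) = cremona (v 1 • c + v 0 • d) := by
    rw [hM]
    funext j
    rw [map_cremona]
    congr 1
    funext k
    simp [line, mul_comm]
  have hsurj : Function.Surjective M := by
    rw [← LinearMap.range_eq_top, eq_top_iff, ← (Pi.basisFun K (Fin (n + 1))).span_eq,
      Submodule.span_le]
    rintro _ ⟨j, rfl⟩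
    obtain ⟨t, ht, hj⟩ := exists_cremona_line_eq_smul_single h j
    refine (Submodule.smul_mem_iff _ ht).mp ⟨veronese n ![c j, -d j], ?_⟩
    rw [hMv, Pi.basisFun_apply, ← hj]
    simp only [Matrix.cons_val]
  exact ⟨.ofBijective M ⟨LinearMap.injective_iff_surjective.mpr hsurj, hsurj⟩, hMv⟩

end Veronese

/-- An irreducible closed cone that passes through the coordinate points and on which the ratio of
any two coordinates determines the point. This is how linear independence of all
`r + 1`-point subsets is used; the name alludes to the arcs of finite geometry. -/
structure IsFramedArc {K σ : Type*} [Field K] [DecidableEq σ] (Y : Set (σ → K)) : Prop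
    extends IsIrredClosedCone Y where
  single_mem : ∀ i, Pi.single i 1 ∈ Y
  eq_of_mem_chart : ∀ {o i : σ}, i ≠ o → ∀ y ∈ chart Y o, ∀ z ∈ chart Y o, y i = z i → y = z

namespace IsFramedArc

open scoped IntermediateField

universe u v

variable {K : Type u} {σ : Type v} [Field K] [DecidableEq σ] {Y : Set (σ → K)} {o i j k l : σ}

theorem single_mem_chart (hY : IsFramedArc Y) (o : σ) : Pi.single o 1 ∈ chart Y o :=
  ⟨hY.single_mem o, by simp⟩

theorem eq_zero_of_linear (hY : IsFramedArc Y) (hij : i ≠ j) {a b : K}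
    (h : ∀ y ∈ Y, a * y i + b * y j = 0) : a = 0 ∧ b = 0 :=
  ⟨by simpa [hij.symm] using h _ (hY.single_mem i), by simpa [hij] using h _ (hY.single_mem j)⟩

theorem eq_zero_of_linear_mul_linear (hY : IsFramedArc Y) (hij : i ≠ j) (hkl : k ≠ l)
    {a b c d : K} (h : ∀ y ∈ Y, (a * y i + b * y j) * (c * y k + d * y l) = 0) :
    (a = 0 ∧ b = 0) ∨ (c = 0 ∧ d = 0) := by
  have hhom (s t : K) (m n : σ) : (C s * X m + C t * X n : MvPolynomial σ K).IsHomogeneous 1 :=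
    (isHomogeneous_C_mul_X s m).add (isHomogeneous_C_mul_X t n)
  refine (hY.prime (hhom a b i j) (hhom c d k l) (by simpa using h)).imp (fun h ↦ ?_) fun h ↦ ?_
  · exact hY.eq_zero_of_linear hij (by simpa using h)
  · exact hY.eq_zero_of_linear hkl (by simpa using h)

theorem X_sub_C_notMem_vanishingIdeal_chart (hY : IsFramedArc Y) (hio : i ≠ o) (c : K) :
    X i - C c ∉ vanishingIdeal K (chart Y o) := by
  intro hmem
  obtain rfl : c = 0 := by simpa [hio] using hmem _ (hY.single_mem_chart o)
  have hX := hY.eval_eq_zero_of_chart ⟨_, hY.single_mem_chart o⟩ (isHomogeneous_X K i)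
    fun y hy ↦ by simpa using hmem y hy
  simpa using hX _ (hY.single_mem i)

theorem pairwise_of_reciprocal_line (hY : IsFramedArc Y) (hio : i ≠ o) {c d : σ → K}
    (hc : ∀ j, c j = 0 ↔ j = i) (hd : ∀ j, d j = 0 ↔ j = o)
    (hrel : ∀ y ∈ Y, ∀ j, y j * (c j * y i + d j * y o) = y i * y o) :
    Pairwise fun k l ↦ c k * d l ≠ c l * d k := by
  intro k l hkl heq
  have hprod : ∀ y ∈ Y, (c k * y i + d k * y o) * (d k * y k + -d l * y l) = 0 :=
    fun y hy ↦ by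
      linear_combination d k * (hrel y hy k - hrel y hy l) - y l * y i * heq
  rcases hY.eq_zero_of_linear_mul_linear hio hkl hprod with ⟨hck, hdk⟩ | ⟨hdk, hdl⟩
  · exact hio (((hc k).mp hck).symm.trans ((hd k).mp hdk))
  · exact hkl (((hd k).mp hdk).trans ((hd l).mp (neg_eq_zero.mp hdl)).symm)

variable [IsAlgClosed K]

theorem exists_generic_point (hY : IsFramedArc Y) (o : σ) :
    ∃ (L : Type (max u v)) (_ : Field L) (_ : Algebra K L) (ξ : σ → L),
      (∀ f, aeval ξ f = 0 ↔ f ∈ vanishingIdeal K (chart Y o)) ∧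
        ∀ i ≠ o, Transcendental K (ξ i) := by
  have := hY.isPrime_vanishingIdeal_chart ⟨_, hY.single_mem_chart o⟩
  obtain ⟨ξ, hξ⟩ := exists_aeval_eq_zero_iff_mem (vanishingIdeal K (chart Y o))
  refine ⟨_, inferInstance, inferInstance, ξ, hξ, fun i hio ↦ ?_⟩
  simpa using transcendental_aeval_of_forall_sub_C_notMem (fun f ↦ (hξ f).mp)
    (hY.X_sub_C_notMem_vanishingIdeal_chart hio)

theorem polynomial_eq_zero_of_chart (hY : IsFramedArc Y) (hio : i ≠ o) {p : Polynomial K}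
    (hp : ∀ y ∈ chart Y o, p.eval (y i) = 0) : p = 0 := by
  obtain ⟨L, _, _, ξ, hξ, htr⟩ := hY.exists_generic_point o
  refine transcendental_iff.mp (htr i hio) p ?_
  have hmem : Polynomial.aeval (X i : MvPolynomial σ K) p ∈ vanishingIdeal K (chart Y o) :=
    fun y hy ↦ by simpa [← Polynomial.aeval_algHom_apply] using hp y hy
  simpa [← Polynomial.aeval_algHom_apply] using (hξ _).mpr hmem

section

variable [Fintype σ]

theorem eval_cremona_line_eq_zero (hY : IsFramedArc Y) (hio : i ≠ o)
    {c d : σ → K} (hrel : ∀ y ∈ Y, ∀ j, y j * (c j * y i + d j * y o) = y i * y o)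
    {f : MvPolynomial σ K} {n : ℕ} (hf : f.IsHomogeneous n) (hfY : ∀ y ∈ Y, eval y f = 0) (s : K) :
    eval (cremona (s • c + d)) f = 0 := by
  let p : Polynomial K :=
    aeval (cremona fun k ↦ Polynomial.C (c k) * Polynomial.X + Polynomial.C (d k)) f
  have hp (s : K) : p.eval s = eval (cremona (s • c + d)) f := by
    rw [← Polynomial.coe_aeval_eq_eval, comp_aeval_apply, ← coe_aeval_eq_eval,
      RingHom.coe_coe]
    congr 2
    funext j
    rw [map_cremona]
    congr 1
    funext k
    simpa using mul_comm (c k) s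
  have hXp : Polynomial.X * p = 0 := hY.polynomial_eq_zero_of_chart hio fun y hy ↦ by
    rw [Polynomial.eval_mul, Polynomial.eval_X, hp]
    rcases eq_or_ne (y i) 0 with hyi | hyi
    · rw [hyi, zero_mul]
    obtain ⟨t, ht, hyt⟩ := exists_eq_smul_cremona_of_mul_eq hyi (l := y i • c + d) fun j ↦ by
      simpa [hy.2, mul_comm] using hrel y hy.1 j
    have hfy : t ^ n * eval (cremona (y i • c + d)) f = 0 := by
      rw [← eval_smul_of_isHomogeneous hf, ← hyt, hfY y hy.1]
    rw [(mul_eq_zero.mp hfy).resolve_left (pow_ne_zero n ht), mul_zero]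
  rw [← hp, (mul_eq_zero.mp hXp).resolve_left Polynomial.X_ne_zero, Polynomial.eval_zero]

theorem cremona_line_mem (hY : IsFramedArc Y) (hio : i ≠ o)
    {c d : σ → K} (hc : c i = 0)
    (hrel : ∀ y ∈ Y, ∀ j, y j * (c j * y i + d j * y o) = y i * y o) {v : Fin 2 → K}
    (hv : cremona (v 1 • c + v 0 • d) ≠ 0) : cremona (v 1 • c + v 0 • d) ∈ Y := by
  rcases eq_or_ne (v 0) 0 with hv0 | hv0
  · have hsingle := cremona_eq_smul_single (y := v 1 • c + v 0 • d) (j := i) (by simp [hc, hv0])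
    rw [hsingle] at hv ⊢
    exact hY.smul_mem (left_ne_zero_of_smul hv) (hY.single_mem i)
  · refine hY.closed _ hv fun f n hf hfY ↦ ?_
    have hscale : v 1 • c + v 0 • d = v 0 • ((v 1 / v 0) • c + d) := by
      rw [smul_add, smul_smul, mul_div_cancel₀ _ hv0]
    rw [hscale, cremona_smul, eval_smul_of_isHomogeneous hf,
      hY.eval_cremona_line_eq_zero hio hrel hf hfY, mul_zero]

end

variable [CharZero K]

theorem exists_mobius_on_chart [Finite σ] (hY : IsFramedArc Y) (hio : i ≠ o)
    (hjo : j ≠ o) : ∃ a b c d : K, (c ≠ 0 ∨ d ≠ 0) ∧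
      ∀ y ∈ chart Y o, y j * (c * y i + d) = a * y i + b := by
  obtain ⟨L, _, _, ξ, hξ, htr⟩ := hY.exists_generic_point o
  have hadjoin (i j : σ) (hio : i ≠ o) : ξ j ∈ K⟮ξ i⟯ := by
    simpa using aeval_mem_adjoin_aeval (p := X i) (q := X j)
      (by
        rw [hY.zeroLocus_vanishingIdeal_chart]
        intro w hw z hz hwz
        rw [hY.eq_of_mem_chart hio w hw z hz (by simpa using hwz)])
      fun f hf ↦ (hξ f).mpr hf
  obtain ⟨a, b, c, d, hcd, hrel⟩ :=
    exists_mobius_of_mem_adjoin (htr i hio) (hadjoin i j hio) (hadjoin j i hjo)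
  refine ⟨a, b, c, d, hcd, fun y hy ↦ ?_⟩
  have hmem : X j * (C c * X i + C d) - (C a * X i + C b) ∈ vanishingIdeal K (chart Y o) :=
    (hξ _).mp (by simp [hrel])
  simpa [sub_eq_zero] using hmem y hy

theorem exists_reciprocal_relation [Finite σ] (hY : IsFramedArc Y) (hio : i ≠ o)
    (hjo : j ≠ o) (hij : i ≠ j) :
    ∃ c d : K, c ≠ 0 ∧ d ≠ 0 ∧ ∀ y ∈ Y, y j * (c * y i + d * y o) = y i * y o := by
  obtain ⟨a, b, c, d, hcd, hrel⟩ := hY.exists_mobius_on_chart hio hjo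
  obtain rfl : b = 0 := by simpa [hio, hjo] using (hrel _ (hY.single_mem_chart o)).symm
  have hhom : (X j * (C c * X i + C d * X o) - C a * X i * X o :
      MvPolynomial σ K).IsHomogeneous (1 + 1) :=
    ((isHomogeneous_X K j).mul ((isHomogeneous_C_mul_X c i).add (isHomogeneous_C_mul_X d o))).sub
      ((isHomogeneous_C_mul_X a i).mul (isHomogeneous_X K o))
  have hquad : ∀ y ∈ Y, y j * (c * y i + d * y o) = a * y i * y o := by
    have h := hY.eval_eq_zero_of_chart ⟨_, hY.single_mem_chart o⟩ hhom fun y hy ↦ by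
      simpa [sub_eq_zero, hy.2] using hrel y hy
    simpa [sub_eq_zero] using h
  have ha : a ≠ 0 := by
    rintro rfl
    have h := hY.eq_zero_of_linear_mul_linear (a := 1) (b := 0) (c := c) (d := d) hjo hio
      fun y hy ↦ by linear_combination hquad y hy
    exact h.elim (fun h ↦ one_ne_zero h.1) fun h ↦ hcd.elim (· h.1) (· h.2)
  have hc : c ≠ 0 := by
    rintro rfl
    have h := hY.eq_zero_of_linear_mul_linear (a := 1) (b := 0) (c := d) (d := -a) hio.symm hij.symm
      fun y hy ↦ by linear_combination hquad y hy
    simp [ha] at h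
  have hd : d ≠ 0 := by
    rintro rfl
    have h := hY.eq_zero_of_linear_mul_linear (a := 1) (b := 0) (c := c) (d := -a) hio hjo
      fun y hy ↦ by linear_combination hquad y hy
    simp [ha] at h
  refine ⟨c / a, d / a, div_ne_zero hc ha, div_ne_zero hd ha, fun y hy ↦ ?_⟩
  field_simp
  linear_combination hquad y hy

theorem eq_smul_single_of_apply_eq_zero [Finite σ] (hY : IsFramedArc Y) {y : σ → K} (hy : y ∈ Y)
    (hyo : y o = 0) : ∃ j, y = y j • Pi.single j 1 := by
  obtain ⟨j, hj⟩ := Function.ne_iff.mp (hY.ne_zero y hy)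
  refine ⟨j, funext fun k ↦ ?_⟩
  rcases eq_or_ne k j with rfl | hkj
  · simp
  suffices y k = 0 by simpa [hkj]
  rcases eq_or_ne k o with rfl | hko
  · exact hyo
  have hjo : j ≠ o := by
    rintro rfl
    exact hj hyo
  obtain ⟨c, d, hc, -, hrel⟩ := hY.exists_reciprocal_relation hjo hko hkj.symm
  have hmul : y k * (c * y j) = 0 := by simpa [hyo] using hrel y hy
  exact (mul_eq_zero.mp hmul).resolve_right (mul_ne_zero hc hj)

theorem exists_reciprocal_line [Finite σ] (hY : IsFramedArc Y) (hio : i ≠ o) :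
    ∃ c d : σ → K, (∀ j, c j = 0 ↔ j = i) ∧ (∀ j, d j = 0 ↔ j = o) ∧
      ∀ y ∈ Y, ∀ j, y j * (c j * y i + d j * y o) = y i * y o := by
  have hex (j : σ) : ∃ c d : K, (c = 0 ↔ j = i) ∧ (d = 0 ↔ j = o) ∧
      ∀ y ∈ Y, y j * (c * y i + d * y o) = y i * y o := by
    rcases eq_or_ne j o with rfl | hjo
    · exact ⟨1, 0, by simp [hio.symm], by simp, fun y _ ↦ by ring⟩
    rcases eq_or_ne j i with rfl | hji
    · exact ⟨0, 1, by simp, by simp [hjo], fun y _ ↦ by ring⟩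
    obtain ⟨c, d, hc, hd, hrel⟩ := hY.exists_reciprocal_relation hio hjo hji.symm
    exact ⟨c, d, by simp [hc, hji], by simp [hd, hjo], hrel⟩
  choose c d hc hd hrel using hex
  exact ⟨c, d, hc, hd, fun y hy j ↦ hrel j y hy⟩

variable [Fintype σ]

theorem exists_smul_cremona_line_of_mem (hY : IsFramedArc Y) {c d : σ → K}
    (hcd : Pairwise fun k l ↦ c k * d l ≠ c l * d k)
    (hrel : ∀ y ∈ Y, ∀ j, y j * (c j * y i + d j * y o) = y i * y o) {y : σ → K} (hy : y ∈ Y) :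
    ∃ (v : Fin 2 → K) (t : K), y = t • cremona (v 1 • c + v 0 • d) := by
  by_cases hzero : ∃ k, y k = 0
  · obtain ⟨k, hk⟩ := hzero
    obtain ⟨j, hj⟩ := hY.eq_smul_single_of_apply_eq_zero hy hk
    obtain ⟨t, ht, htj⟩ := exists_cremona_line_eq_smul_single hcd j
    refine ⟨![c j, -d j], y j / t, ?_⟩
    simp only [Matrix.cons_val]
    rwa [htj, smul_smul, div_mul_cancel₀ _ ht]
  · push Not at hzero
    obtain ⟨t, -, ht⟩ := exists_eq_smul_cremona_of_mul_eq (l := y i • c + y o • d)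
      (mul_ne_zero (hzero i) (hzero o)) fun j ↦ by simpa [mul_comm] using hrel y hy j
    exact ⟨![y o, y i], t, ht⟩

theorem exists_mem_iff_eq_smul_cremona_line (hY : IsFramedArc Y) (hio : i ≠ o) :
    ∃ c d : σ → K, (Pairwise fun k l ↦ c k * d l ≠ c l * d k) ∧
      ∀ y ≠ 0, y ∈ Y ↔ ∃ (v : Fin 2 → K) (t : K), y = t • cremona (v 1 • c + v 0 • d) := by
  obtain ⟨c, d, hc, hd, hrel⟩ := hY.exists_reciprocal_line hio
  have hcd := hY.pairwise_of_reciprocal_line hio hc hd hrel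
  refine ⟨c, d, hcd, fun y hy0 ↦ ⟨hY.exists_smul_cremona_line_of_mem hcd hrel, ?_⟩⟩
  rintro ⟨v, t, rfl⟩
  exact hY.smul_mem (left_ne_zero_of_smul hy0)
    (hY.cremona_line_mem hio ((hc i).mpr rfl) hrel (right_ne_zero_of_smul hy0))

end IsFramedArc

theorem IsFramedArc.exists_mem_iff_eq_smul_veronese {K : Type*} [Field K] [IsAlgClosed K]
    [CharZero K] {n : ℕ} {Y : Set (Fin (n + 1) → K)} (hY : IsFramedArc Y) :
    ∃ M : (Fin (n + 1) → K) ≃ₗ[K] (Fin (n + 1) → K),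
      ∀ y ≠ 0, y ∈ Y ↔ ∃ (v : Fin 2 → K) (t : K), y = t • M (veronese n v) := by
  cases n with
  | zero =>
    refine ⟨.refl K _, fun y hy0 ↦ ?_⟩
    have hy : y = y 0 • Pi.single 0 1 := by
      funext k
      fin_cases k
      simp
    have hmem : y ∈ Y := by
      rw [hy] at hy0 ⊢
      exact hY.smul_mem (left_ne_zero_of_smul hy0) (hY.single_mem 0)
    refine iff_of_true hmem ⟨0, y 0, ?_⟩
    funext k
    fin_cases k
    simp [veronese]
  | succ n =>
    obtain ⟨c, d, hcd, hmem⟩ := hY.exists_mem_iff_eq_smul_cremona_line (i := 1) (o := 0) (by simp)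
    obtain ⟨M, hM⟩ := exists_linearEquiv_veronese_eq_cremona hcd
    exact ⟨M, by simpa only [hM] using hmem⟩

section CoordinateVectors

variable {R σ : Type*} [Ring R] [DecidableEq σ] {y z : σ → R}

theorem mem_span_insert_single [Finite σ] {s : Set σ} (h : ∀ k ∉ s, y k = z k) :
    y ∈ Submodule.span R (insert z ((fun k ↦ Pi.single k 1) '' s)) := by
  cases nonempty_fintype σ
  refine Submodule.mem_span_insert.mpr ⟨1, y - z, ?_, by simp⟩
  rw [pi_eq_sum_univ' (y - z)]
  refine Submodule.sum_mem _ fun k _ ↦ ?_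
  by_cases hk : k ∈ s
  · exact Submodule.smul_mem _ _ (Submodule.subset_span ⟨k, hk, rfl⟩)
  · simp [h k hk]

theorem eq_of_eq_smul_mem_insert_single [Nontrivial R] {s : Set σ} {o : σ} (ho : o ∉ s)
    (hy : y o = 1) (hz : z o = 1) {v : σ → R} (hv : v ∈ insert z ((fun k ↦ Pi.single k 1) '' s))
    {a : R} (h : y = a • v) : y = z := by
  have hav : a * v o = 1 := (congrFun h o).symm.trans hy
  rcases hv with rfl | ⟨k, hk, rfl⟩
  · rw [hz, mul_one] at hav
    rw [h, hav, one_smul]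
  · have hko : o ≠ k := ne_of_mem_of_not_mem hk ho |>.symm
    simp [hko] at hav

end CoordinateVectors

section Projective

open Projectivization

variable {K} {n : ℕ} {X : Set (PS K n)}

/-- The affine cone, without its vertex, over a set of projective points. -/
def cone (X : Set (PS K n)) : Set (Fin n → K) :=
  {v | ∃ hv : v ≠ 0, mk K v hv ∈ X}

theorem mk_mem_iff_mem_cone {v : Fin n → K} (hv : v ≠ 0) : mk K v hv ∈ X ↔ v ∈ cone X :=
  ⟨fun h ↦ ⟨hv, h⟩, fun ⟨_, h⟩ ↦ h⟩

theorem smul_mem_cone {t : K} {v : Fin n → K} (ht : t ≠ 0) (hv : v ∈ cone X) : t • v ∈ cone X := by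
  obtain ⟨hv0, hvX⟩ := hv
  refine ⟨smul_ne_zero ht hv0, ?_⟩
  rwa [(mk_eq_mk_iff' K _ v _ hv0).mpr ⟨t, rfl⟩]

theorem rep_mem_cone {p : PS K n} (hp : p ∈ X) : p.rep ∈ cone X :=
  ⟨p.rep_nonzero, by rwa [mk_rep]⟩

theorem mk_mem_zeros_iff {f : MvPolynomial (Fin n) K} {d : ℕ} (hf : f.IsHomogeneous d)
    {v : Fin n → K} (hv : v ≠ 0) : mk K v hv ∈ zeros K f ↔ eval v f = 0 := by
  refine ⟨fun h ↦ h v hv rfl, fun h w hw hwv ↦ ?_⟩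
  obtain ⟨a, rfl⟩ := (mk_eq_mk_iff' K w v hw hv).mp hwv
  rw [eval_smul_of_isHomogeneous hf, h, mul_zero]

theorem subset_zeros_iff {f : MvPolynomial (Fin n) K} {d : ℕ} (hf : f.IsHomogeneous d) :
    X ⊆ zeros K f ↔ ∀ v ∈ cone X, eval v f = 0 := by
  refine ⟨fun h v ⟨hv, hvX⟩ ↦ (mk_mem_zeros_iff hf hv).mp (h hvX), fun h p hp ↦ ?_⟩
  rw [← mk_rep p, mk_mem_zeros_iff hf]
  exact h _ (rep_mem_cone hp)

theorem isZClosed_zeros {f : MvPolynomial (Fin n) K} {d : ℕ} (hf : f.IsHomogeneous d) :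
    IsZClosed K (zeros K f) :=
  ⟨{f}, by simpa using ⟨d, hf⟩, by simp⟩

theorem isIrredClosedCone_cone (hX : IsIrredClosed K X) : IsIrredClosedCone (cone X) where
  ne_zero _ hv := hv.1
  smul_mem := smul_mem_cone
  prime {f g d e} hf hg hfg := by
    rw [← subset_zeros_iff hf, ← subset_zeros_iff hg]
    refine hX.2.2 _ _ (isZClosed_zeros hf) (isZClosed_zeros hg) fun p hp ↦ ?_
    have hmul := hfg _ (rep_mem_cone hp)
    rw [map_mul, mul_eq_zero] at hmul
    rw [← mk_rep p]
    exact hmul.imp (mk_mem_zeros_iff hf _).mpr (mk_mem_zeros_iff hg _).mpr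
  closed v hv h := by
    obtain ⟨F, hF, rfl⟩ := hX.2.1
    refine ⟨hv, Set.mem_iInter₂.mpr fun f hfF ↦ ?_⟩
    obtain ⟨d, hf⟩ := hF f hfF
    exact (mk_mem_zeros_iff hf hv).mpr
      (h f d hf ((subset_zeros_iff hf).mp (Set.biInter_subset_of_mem hfF)))

theorem mem_projSpan_of_mem_cone {v : Fin n → K} (hv : v ∈ cone X) : v ∈ projSpan K X := by
  obtain ⟨hv0, hvX⟩ := hv
  obtain ⟨a, ha⟩ := exists_smul_eq_mk_rep K v hv0
  rw [← Submodule.smul_mem_iff _ a.ne_zero, ← Units.smul_def, ha]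
  exact Submodule.subset_span (Set.mem_image_of_mem _ hvX)

theorem rep_notMem_projSpan [DecidableEq (PS K n)] {p : PS K n} {T : Finset (PS K n)}
    (h : LinIndepSet K (insert p T)) (hp : p ∉ T) : p.rep ∉ projSpan K (T : Set (PS K n)) := by
  intro hmem
  have hspan : projSpan K (insert p T : Finset (PS K n)) = projSpan K (T : Set (PS K n)) := by
    rw [projSpan, Finset.coe_insert, Set.image_insert_eq, Submodule.span_insert_eq_span hmem]
    rfl
  have hle : Module.finrank K (projSpan K (T : Set (PS K n))) ≤ T.card := by
    classical
    rw [projSpan, ← Finset.coe_image]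
    exact (finrank_span_finset_le_card _).trans Finset.card_image_le
  rw [LinIndepSet, hspan, Finset.card_insert_of_notMem hp] at h
  omega

theorem exists_eq_smul_of_mem_span {r : ℕ}
    (h : ∀ S : Finset (PS K n), ↑S ⊆ X → S.card ≤ r + 1 → LinIndepSet K S)
    {V : Finset (Fin n → K)} (hV : ↑V ⊆ cone X) (hcard : V.card ≤ r) {u : Fin n → K}
    (hu : u ∈ cone X) (huV : u ∈ Submodule.span K (V : Set (Fin n → K))) :
    ∃ v ∈ V, ∃ a : K, u = a • v := by
  classical
  obtain ⟨hu0, huX⟩ := hu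
  let T : Finset (PS K n) := V.attach.image fun v ↦ mk K v.1 (hV v.2).1
  have hTX : ↑(insert (mk K u hu0) T) ⊆ X := by
    rw [Finset.coe_insert, Set.insert_subset_iff]
    refine ⟨huX, fun p hp ↦ ?_⟩
    obtain ⟨v, -, rfl⟩ := Finset.mem_image.mp hp
    exact (hV v.2).2
  have hTcard : T.card ≤ r := Finset.card_image_le.trans (by simpa using hcard)
  have hVT : Submodule.span K (V : Set (Fin n → K)) ≤ projSpan K (T : Set (PS K n)) := by
    refine Submodule.span_le.mpr fun v hv ↦ mem_projSpan_of_mem_cone ⟨(hV hv).1, ?_⟩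
    exact Finset.mem_image.mpr ⟨⟨v, hv⟩, Finset.mem_attach _ _, rfl⟩
  have huT : mk K u hu0 ∈ T := by
    by_contra hnot
    have hle := (Finset.card_insert_le (mk K u hu0) T).trans (Nat.succ_le_succ hTcard)
    refine rep_notMem_projSpan (h _ hTX hle) hnot ?_
    obtain ⟨a, ha⟩ := exists_smul_eq_mk_rep K u hu0
    exact ha ▸ Submodule.smul_mem _ _ (hVT huV)
  obtain ⟨v, -, hvu⟩ := Finset.mem_image.mp huT
  obtain ⟨a, ha⟩ := (mk_eq_mk_iff' K u v hu0 _).mp hvu.symm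
  exact ⟨v, v.2, a, ha.symm⟩

theorem exists_linearEquiv_single_mem_cone (hX : Nondeg K X) :
    ∃ e : (Fin n → K) ≃ₗ[K] (Fin n → K), ∀ i, e (Pi.single i 1) ∈ cone X := by
  have hspan : ⊤ ≤ Submodule.span K (Projectivization.rep '' X) := top_le_iff.mpr hX
  let b₀ := Pi.basisFun K (Fin n)
  let b := Module.Basis.ofSpan hspan
  refine ⟨b₀.equiv b (b₀.indexEquiv b), fun i ↦ ?_⟩
  obtain ⟨p, hp, hpb⟩ := Module.Basis.ofSpan_subset hspan ⟨b₀.indexEquiv b i, rfl⟩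
  rw [← Pi.basisFun_apply, Module.Basis.equiv_apply, ← hpb]
  exact rep_mem_cone hp

theorem isFramedArc_preimage_cone {r : ℕ} {X : Set (PS K (r + 1))} (hX : IsIrredClosed K X)
    (h : ∀ S : Finset (PS K (r + 1)), ↑S ⊆ X → S.card ≤ r + 1 → LinIndepSet K S)
    (e : (Fin (r + 1) → K) ≃ₗ[K] (Fin (r + 1) → K)) (he : ∀ i, e (Pi.single i 1) ∈ cone X) :
    IsFramedArc (e ⁻¹' cone X) where
  toIsIrredClosedCone := (isIrredClosedCone_cone hX).preimage e
  single_mem := he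
  eq_of_mem_chart {o i} hio y hy z hz hyz := by
    classical
    let s : Finset (Fin (r + 1)) := (Finset.univ.erase o).erase i
    let V : Finset (Fin (r + 1) → K) := insert z (s.image fun k ↦ Pi.single k 1)
    have hV : (V : Set (Fin (r + 1) → K)) = insert z ((fun k ↦ Pi.single k 1) '' ↑s) := by
      rw [Finset.coe_insert, Finset.coe_image]
    have hVX : ↑(V.image e) ⊆ cone X := by
      rw [Finset.coe_image, hV, Set.image_subset_iff, Set.insert_subset_iff,
        Set.image_subset_iff]
      exact ⟨hz.1, fun k _ ↦ he k⟩
    have hcard : (V.image e).card ≤ r := calc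
      (V.image e).card ≤ (s.image fun k ↦ (Pi.single k 1 : Fin (r + 1) → K)).card + 1 :=
        Finset.card_image_le.trans (Finset.card_insert_le _ _)
      _ ≤ s.card + 1 := by gcongr; exact Finset.card_image_le
      _ = r := by
        rw [Finset.card_erase_add_one (by simpa using hio), Finset.card_erase_of_mem (by simp),
          Finset.card_fin, Nat.add_sub_cancel]
    have hspan : e y ∈ Submodule.span K (V.image e : Set (Fin (r + 1) → K)) := by
      rw [Finset.coe_image, hV]
      refine Submodule.apply_mem_span_image_of_mem_span e.toLinearMap
        (mem_span_insert_single fun k hk ↦ ?_)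
      obtain rfl | rfl : k = o ∨ k = i := by simpa [s, or_iff_not_imp_left] using hk
      exacts [hy.2.trans hz.2.symm, hyz]
    obtain ⟨w, hw, a, ha⟩ := exists_eq_smul_of_mem_span h hVX hcard hy.1 hspan
    obtain ⟨v, hv, rfl⟩ := Finset.mem_image.mp hw
    exact eq_of_eq_smul_mem_insert_single (s := s) (by simp [s]) hy.2 hz.2 (by rwa [← hV])
      (e.injective (by rw [ha, map_smul]))

theorem isRNC_of_mem_cone_iff {r : ℕ} {X : Set (PS K (r + 1))}
    (g : (Fin (r + 1) → K) ≃ₗ[K] (Fin (r + 1) → K))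
    (h : ∀ x ≠ 0, x ∈ cone X ↔ ∃ (v : Fin 2 → K) (t : K), x = t • g (veronese r v)) :
    IsRNC K X := by
  refine ⟨g, Set.ext fun p ↦ ⟨fun hp ↦ ?_, ?_⟩⟩
  · obtain ⟨v, t, hvt⟩ := (h _ p.rep_nonzero).mp (rep_mem_cone hp)
    have hg : g (veronese r v) ≠ 0 := right_ne_zero_of_smul (hvt ▸ p.rep_nonzero)
    refine ⟨v, hg, ?_⟩
    rw [← mk_rep p]
    exact (mk_eq_mk_iff' K _ _ _ _).mpr ⟨t, hvt.symm⟩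
  · rintro ⟨v, hv, rfl⟩
    exact (mk_mem_iff_mem_cone hv).mpr ((h _ hv).mpr ⟨v, 1, (one_smul K _).symm⟩)

end Projective

/-- If every finite subset of `X` with at most `r+1` points is linearly
independent (i.e. `ρ'(X) = r+1`), then `X` is a rational normal curve. -/
theorem statement0 [IsAlgClosed K] [CharZero K] (r : ℕ) (X : Set (PS K (r + 1)))
    (hX : IsVariety K X)
    (h : ∀ S : Finset (PS K (r + 1)), ↑S ⊆ X → S.card ≤ r + 1 → LinIndepSet K S) :
    IsRNC K X := by
  obtain ⟨e, he⟩ := exists_linearEquiv_single_mem_cone hX.2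
  obtain ⟨M, hM⟩ := (isFramedArc_preimage_cone hX.1 h e he).exists_mem_iff_eq_smul_veronese
  refine isRNC_of_mem_cone_iff (M.trans e) fun x hx ↦ ?_
  have hmem := hM (e.symm x) (e.symm.map_ne_zero_iff.mpr hx)
  simpa [LinearEquiv.symm_apply_eq] using hmem

end Dep
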